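/- arXiv:2412.11842 — 6 statements merged into one kernel-verified Lean document; each statement's English description precedes it below -/
import Mathlib

section
/- Theorem 1.3(i): Let d ≥ 1 and let ε be a real number with 0 ≤ ε ≤ γ_d. Then there exists no probability measure ν on ℤ^d satisfying the balance equation with parameter ε, i.e. there is no ν : ℤ^d → [0,∞) with Σ_{x∈ℤ^d} ν_x = 1 such that (1 + ε ν_0) ν_x = (1/(2d)) Σ_{i=1}^d (ν_{x+e_i} + ν_{x−e_i}) for all x ∈ ℤ^d, x ≠ 0. -/
open Finset

namespace CBRW

/-- The `i`-th canonical basis vector of `ℤ^d`. -/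
def e (d : ℕ) (i : Fin d) : Fin d → ℤ := Pi.single i 1

/-- The step of the simple random walk corresponding to the direction `(i, b)`:
`+e_i` if `b = true`, `-e_i` if `b = false`. -/
def dir (d : ℕ) (s : Fin d × Bool) : Fin d → ℤ := if s.2 then e d s.1 else -(e d s.1)

/-- The position at time `j` of the simple random walk started at `x` and driven by the
word of increments `w` (of length `k`); only the first `j` letters of `w` are used. -/
def posAt (d : ℕ) {k : ℕ} (x : Fin d → ℤ) (w : Fin k → Fin d × Bool) (j : ℕ) :
    Fin d → ℤ :=
  x + ∑ i : Fin k, if (i : ℕ) < j then dir d (w i) else 0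

open Classical in
/-- `ℙ_x(τ_y = k)`: the probability that the simple random walk on `ℤ^d` started at `x`
first visits `y` at time `k` (meaningful for `k ≥ 1`). -/
noncomputable def firstHitProb (d : ℕ) (x y : Fin d → ℤ) (k : ℕ) : ℝ :=
  ((Finset.univ.filter (fun w : Fin k → Fin d × Bool =>
      (∀ j, 1 ≤ j → j < k → posAt d x w j ≠ y) ∧ posAt d x w k = y)).card : ℝ) /
    (2 * (d : ℝ)) ^ k

open Classical in
/-- `ℙ_x(τ_y ≥ k + 1)`: the probability that the simple random walk on `ℤ^d` started at `x`
avoids `y` at all times `1, …, k`. -/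
noncomputable def avoidProb (d : ℕ) (x y : Fin d → ℤ) (k : ℕ) : ℝ :=
  ((Finset.univ.filter (fun w : Fin k → Fin d × Bool =>
      ∀ j, 1 ≤ j → j ≤ k → posAt d x w j ≠ y)).card : ℝ) / (2 * (d : ℝ)) ^ k

/-- `γ_d = ℙ_0(τ_0 = ∞)`: the probability that the simple random walk started at `0`
never returns to `0`. -/
noncomputable def gamma (d : ℕ) : ℝ := 1 - ∑' k : ℕ, firstHitProb d 0 0 (k + 1)

/-- `E_x[𝟙_{τ_y < ∞} (1 + u)^{-τ_y}]` for the simple random walk started at `x`. -/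
noncomputable def hitGen (d : ℕ) (x y : Fin d → ℤ) (u : ℝ) : ℝ :=
  ∑' k : ℕ, firstHitProb d x y (k + 1) * ((1 + u) ^ (k + 1))⁻¹

/-- `ν` satisfies the balance equation with parameter `ε`:
`(1 + ε ν 0) ν x = (1/(2d)) ∑ i (ν (x + e i) + ν (x - e i))` for all `x ≠ 0`. -/
def BalanceEq (d : ℕ) (ε : ℝ) (ν : (Fin d → ℤ) → ℝ) : Prop :=
  ∀ x : Fin d → ℤ, x ≠ 0 →
    (1 + ε * ν 0) * ν x =
      (1 / (2 * (d : ℝ))) * ∑ i : Fin d, (ν (x + e d i) + ν (x - e d i))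

/-- `ν` is a probability measure on `ℤ^d`, identified with a nonnegative function
summing to `1`. -/
def IsProbMeasure (d : ℕ) (ν : (Fin d → ℤ) → ℝ) : Prop :=
  (∀ x, 0 ≤ ν x) ∧ HasSum ν 1

end CBRW

/-!
Let `P` be the transition operator of the walk, `ν` a solution and `u = ε ν 0`, so that
`P ν = (1 + u) ν` off the origin.

If `u ≤ 0`, then `P ν ≤ ν` off the origin, so on either side of `0` each coordinate marginal of `ν`
is a concave sequence tending to `0`. Such a sequence is nondecreasing, hence nonpositive: `ν = 0`.

If `u > 0`, then `P ν 0 ≤ ν 0 * ℙ_0(τ_0 < ∞) = ν 0 * (1 - γ_d)`, because `ν` evaluated along the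
walk and discounted by `1 + u` per step is a bounded martingale between the first step and the first
return to `0`. As `P` preserves the total mass, `(1 + u) ν 0 - P ν 0 = u = ε ν 0`. Together,
`γ_d ν 0 ≤ ν 0 - P ν 0 = ε ν 0 - u ν 0 < ε ν 0`.
-/

namespace CBRW

open Filter Topology

lemma monotone_of_concave_of_tendsto {a : ℕ → ℝ} {l : ℝ}
    (hconcave : ∀ n, a (n + 2) + a n ≤ 2 * a (n + 1))
    (hlim : Tendsto a atTop (𝓝 l)) : Monotone a := by
  have hanti : Antitone fun n ↦ a (n + 1) - a n :=
    antitone_nat_of_succ_le fun n ↦ by linarith [hconcave n]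
  have hzero : Tendsto (fun n ↦ a (n + 1) - a n) atTop (𝓝 0) := by
    simpa only [sub_self, Function.comp_apply] using
      (hlim.comp (tendsto_add_atTop_nat 1)).sub hlim
  exact monotone_nat_of_le_succ fun n ↦ sub_nonneg.1 (hanti.le_of_tendsto hzero n)

lemma nonpos_of_concave_of_summable {a : ℕ → ℝ}
    (hconcave : ∀ n, a (n + 2) + a n ≤ 2 * a (n + 1)) (ha : Summable a) (n : ℕ) : a n ≤ 0 :=
  (monotone_of_concave_of_tendsto hconcave ha.tendsto_atTop_zero).ge_of_tendsto
    ha.tendsto_atTop_zero n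

variable {d : ℕ}

/-- The transition operator `P` of the simple random walk, `P f x = E_x[f(S_1)]`. -/
noncomputable def markovOp (d : ℕ) : ((Fin d → ℤ) → ℝ) →ₗ[ℝ] ((Fin d → ℤ) → ℝ) where
  toFun f x := (2 * (d : ℝ))⁻¹ * ∑ s, f (x + dir d s)
  map_add' f g := by ext x; simp only [Pi.add_apply, sum_add_distrib, mul_add]
  map_smul' c f := by
    ext x; simp only [Pi.smul_apply, smul_eq_mul, ← mul_sum, mul_left_comm, RingHom.id_apply]

lemma markovOp_apply (f : (Fin d → ℤ) → ℝ) (x : Fin d → ℤ) :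
    markovOp d f x = (2 * (d : ℝ))⁻¹ * ∑ s, f (x + dir d s) := rfl

lemma sum_dir {M : Type*} [AddCommMonoid M] (f : (Fin d → ℤ) → M) :
    ∑ s, f (dir d s) = ∑ i, (f (e d i) + f (-e d i)) := by
  simp only [Fintype.sum_prod_type, Fintype.sum_bool, dir, if_true, Bool.false_eq_true, if_false]

lemma balanceEq_iff_markovOp {ε : ℝ} {ν : (Fin d → ℤ) → ℝ} :
    BalanceEq d ε ν ↔ ∀ x, x ≠ 0 → markovOp d ν x = (1 + ε * ν 0) * ν x := by
  refine forall₂_congr fun x _ ↦ ?_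
  rw [markovOp_apply, sum_dir fun v ↦ ν (x + v), eq_comm, one_div]
  simp only [sub_eq_add_neg]

lemma markovOp_mono : Monotone (markovOp d) := fun f g hfg x ↦
  mul_le_mul_of_nonneg_left (sum_le_sum fun s _ ↦ hfg (x + dir d s)) (by positivity)

lemma markovOp_const [NeZero d] (c : ℝ) : markovOp d (fun _ ↦ c) = fun _ ↦ c := by
  ext x
  have hd : (d : ℝ) ≠ 0 := NeZero.ne _
  simp only [markovOp_apply, sum_const, card_univ, Fintype.card_prod, Fintype.card_fin,
    Fintype.card_bool, nsmul_eq_mul, Nat.cast_mul, Nat.cast_ofNat]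
  field_simp

lemma hasSum_markovOp [NeZero d] {f : (Fin d → ℤ) → ℝ} {a : ℝ} (hf : HasSum f a) :
    HasSum (markovOp d f) a := by
  have htranslates : HasSum (fun x ↦ ∑ s, f (x + dir d s)) (∑ _s : Fin d × Bool, a) :=
    hasSum_sum fun s _ ↦ (Equiv.addRight (dir d s)).hasSum_iff.mpr hf
  have hconst : (2 * (d : ℝ))⁻¹ * ∑ _s : Fin d × Bool, a = a := congrFun (markovOp_const a) 0
  exact hconst ▸ htranslates.mul_left _

lemma mul_sub_markovOp_eq_of_eq_mul_off [NeZero d] {f : (Fin d → ℤ) → ℝ} {a c : ℝ}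
    {y : Fin d → ℤ} (hf : HasSum f a) (h : ∀ x, x ≠ y → markovOp d f x = c * f x) :
    c * f y - markovOp d f y = (c - 1) * a := by
  have hdefect := (hf.mul_left c).sub (hasSum_markovOp hf)
  have hsupp := hasSum_single (f := fun x ↦ c * f x - markovOp d f x) y
    fun x hx ↦ sub_eq_zero.2 (h x hx).symm
  rw [hsupp.unique hdefect, sub_one_mul]

section Marginal

/-- The mass `f` gives to the hyperplane `{x | x i = k}`; as a function of `k`, the `i`-th marginal
of `f`. -/
noncomputable def marginal (i : Fin d) (f : (Fin d → ℤ) → ℝ) (k : ℤ) : ℝ :=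
  ∑' x : (fun x : Fin d → ℤ ↦ x i) ⁻¹' {k}, f x

variable {f : (Fin d → ℤ) → ℝ}

lemma summable_marginal (hf : Summable f) (i : Fin d) : Summable (marginal i f) :=
  (hf.hasSum.tsum_fiberwise fun x ↦ x i).summable

lemma le_marginal (hf0 : 0 ≤ f) (hf : Summable f) (i : Fin d) (x : Fin d → ℤ) :
    f x ≤ marginal i f (x i) :=
  (hf.subtype _).le_tsum (⟨x, rfl⟩ : (fun x : Fin d → ℤ ↦ x i) ⁻¹' {x i}) fun z _ ↦ hf0 z

lemma marginal_comp_add_right (i : Fin d) (f : (Fin d → ℤ) → ℝ) (v : Fin d → ℤ) (k : ℤ) :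
    marginal i (fun x ↦ f (x + v)) k = marginal i f (k + v i) :=
  ((Equiv.addRight v).subtypeEquiv fun x ↦ by simp).tsum_eq
    fun x : (fun x : Fin d → ℤ ↦ x i) ⁻¹' {k + v i} ↦ f x

lemma marginal_markovOp (hf : Summable f) (i : Fin d) (k : ℤ) :
    marginal i (markovOp d f) k = (2 * (d : ℝ))⁻¹ * ∑ s, marginal i f (k + dir d s i) := by
  have hshift (s : Fin d × Bool) : Summable fun x ↦ f (x + dir d s) :=
    (Equiv.addRight (dir d s)).summable_iff.mpr hf
  simp only [← marginal_comp_add_right]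
  simp only [marginal, markovOp_apply]
  rw [tsum_mul_left]
  congr 1
  exact Summable.tsum_finsetSum fun s _ ↦ (hshift s).subtype _

lemma sum_dir_apply_sub (m : ℤ → ℝ) (i : Fin d) (k : ℤ) :
    ∑ s, (m (k + dir d s i) - m k) = m (k + 1) + m (k - 1) - 2 * m k := by
  rw [sum_dir fun v ↦ m (k + v i) - m k, sum_eq_single i]
  · simp only [e, Pi.neg_apply, Pi.single_eq_same, ← sub_eq_add_neg]
    ring
  · intro j _ hji
    simp only [e, Pi.neg_apply, Pi.single_eq_of_ne hji.symm, neg_zero, add_zero, sub_self]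
  · exact fun hi ↦ absurd (mem_univ i) hi

lemma marginal_add_one_add_marginal_sub_one_le {i : Fin d} {k : ℤ} (hf : Summable f)
    (h : ∀ x, x i = k → markovOp d f x ≤ f x) :
    marginal i f (k + 1) + marginal i f (k - 1) ≤ 2 * marginal i f k := by
  have : NeZero d := ⟨i.pos.ne'⟩
  have hd : (0 : ℝ) < 2 * d := mul_pos two_pos (Nat.cast_pos.2 i.pos)
  have hle : marginal i (markovOp d f) k ≤ marginal i f k :=
    ((hasSum_markovOp hf.hasSum).summable.subtype _).tsum_le_tsum (fun x ↦ h x x.2) (hf.subtype _)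
  have hlaplacian := sum_dir_apply_sub (marginal i f) i k
  rw [sum_sub_distrib, ← mul_inv_cancel_left₀ hd.ne' (∑ s, marginal i f (k + dir d s i)),
    ← marginal_markovOp hf] at hlaplacian
  simp only [sum_const, card_univ, Fintype.card_prod, Fintype.card_fin, Fintype.card_bool,
    nsmul_eq_mul, Nat.cast_mul, Nat.cast_ofNat] at hlaplacian
  linarith [mul_le_mul_of_nonneg_left hle hd.le]

lemma eq_zero_of_markovOp_le_off [NeZero d] {y : Fin d → ℤ} (hf0 : 0 ≤ f) (hf : Summable f)
    (h : ∀ x, x ≠ y → markovOp d f x ≤ f x) : f = 0 := by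
  set m := marginal 0 f
  have hm : Summable m := summable_marginal hf 0
  have hconcave (k : ℤ) (hk : k ≠ y 0) : m (k + 1) + m (k - 1) ≤ 2 * m k :=
    marginal_add_one_add_marginal_sub_one_le hf fun x hx ↦ h x fun hxy ↦ hk (hx ▸ hxy ▸ rfl)
  have hright (n : ℕ) : m (y 0 + n) ≤ 0 := by
    refine nonpos_of_concave_of_summable (a := fun n : ℕ ↦ m (y 0 + n)) (fun n ↦ ?_)
      (hm.comp_injective ((add_right_injective (y 0)).comp Nat.cast_injective)) n
    convert hconcave (y 0 + (n + 1 : ℕ)) (by lia) using 3 <;> lia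
  have hleft (n : ℕ) : m (y 0 - n) ≤ 0 := by
    refine nonpos_of_concave_of_summable (a := fun n : ℕ ↦ m (y 0 - n)) (fun n ↦ ?_)
      (hm.comp_injective ((sub_right_injective (b := y 0)).comp Nat.cast_injective)) n
    rw [add_comm]
    convert hconcave (y 0 - (n + 1 : ℕ)) (by lia) using 3 <;> lia
  refine le_antisymm (fun x ↦ (le_marginal hf0 hf 0 x).trans ?_) hf0
  rcases le_total (y 0) (x 0) with hyx | hxy
  · obtain ⟨n, hn⟩ := Int.le.dest hyx
    exact hn ▸ hright n
  · obtain ⟨n, hn⟩ := Int.le.dest hxy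
    exact eq_sub_of_add_eq hn ▸ hleft n

end Marginal

section Hitting

lemma posAt_zero {k : ℕ} (x : Fin d → ℤ) (w : Fin k → Fin d × Bool) : posAt d x w 0 = x := by
  simp only [posAt, not_lt_zero, if_false, sum_const_zero, add_zero]

lemma posAt_cons_succ {k : ℕ} (x : Fin d → ℤ) (s : Fin d × Bool) (w : Fin k → Fin d × Bool)
    (j : ℕ) :
    posAt d x (Fin.cons s w : Fin (k + 1) → Fin d × Bool) (j + 1) = posAt d (x + dir d s) w j := by
  simp only [posAt, Fin.sum_univ_succ, Fin.cons_zero, Fin.cons_succ, Fin.val_zero, Fin.val_succ,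
    Nat.zero_lt_succ, if_true, Nat.succ_lt_succ_iff, add_assoc]

/-- The walk from `x` driven by the word `w` of length `k` first visits `y` at time `k`: the event
counted by `firstHitProb`. For `k = 0` this means `x = y`. -/
def IsFirstHit (x y : Fin d → ℤ) {k : ℕ} (w : Fin k → Fin d × Bool) : Prop :=
  (∀ j, 1 ≤ j → j < k → posAt d x w j ≠ y) ∧ posAt d x w k = y

open Classical in
lemma firstHitProb_eq_card_div (x y : Fin d → ℤ) (k : ℕ) :
    firstHitProb d x y k =
      (#{w : Fin k → Fin d × Bool | IsFirstHit x y w} : ℝ) / (2 * (d : ℝ)) ^ k := by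
  unfold firstHitProb IsFirstHit
  congr!

lemma isFirstHit_cons {k : ℕ} {x y : Fin d → ℤ} {s : Fin d × Bool} {w : Fin k → Fin d × Bool} :
    IsFirstHit x y (Fin.cons s w : Fin (k + 1) → Fin d × Bool) ↔
      ¬(0 < k ∧ x + dir d s = y) ∧ IsFirstHit (x + dir d s) y w := by
  simp only [IsFirstHit, posAt_cons_succ, ← and_assoc]
  refine and_congr_left fun _ ↦ ⟨fun h ↦ ⟨?_, fun j _ hjk ↦ ?_⟩, ?_⟩
  · rintro ⟨hk, hxy⟩
    exact h 1 le_rfl (by lia) (by rw [posAt_cons_succ, posAt_zero, hxy])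
  · exact posAt_cons_succ x s w j ▸ h (j + 1) (by lia) (by lia)
  · rintro ⟨hfirst, hlater⟩ (_ | _ | j) hj hjk
    · lia
    · rw [posAt_cons_succ, posAt_zero]
      exact fun hxy ↦ hfirst ⟨by lia, hxy⟩
    · exact posAt_cons_succ x s w (j + 1) ▸ hlater (j + 1) (by lia) (by lia)

open Classical in
lemma card_filter_fin_cons {α : Type*} [Fintype α] {k : ℕ} (p : (Fin (k + 1) → α) → Prop) :
    #{w | p w} = ∑ a, #{w : Fin k → α | p (Fin.cons a w)} := by
  simp only [card_filter]
  rw [← (Fin.consEquiv fun _ ↦ α).sum_comp, Fintype.sum_prod_type]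
  rfl

open Classical in
lemma card_isFirstHit_succ (x y : Fin d → ℤ) (k : ℕ) :
    #{w : Fin (k + 1) → Fin d × Bool | IsFirstHit x y w} =
      ∑ s, if 0 < k ∧ x + dir d s = y then 0
        else #{w : Fin k → Fin d × Bool | IsFirstHit (x + dir d s) y w} := by
  rw [card_filter_fin_cons]
  refine sum_congr rfl fun s _ ↦ ?_
  split_ifs with h
  · exact card_eq_zero.2 (filter_eq_empty_iff.2 fun w _ hw ↦ (isFirstHit_cons.1 hw).1 h)
  · exact congrArg card (filter_congr fun w _ ↦ isFirstHit_cons.trans (and_iff_right h))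

lemma firstHitProb_zero (x y : Fin d → ℤ) : firstHitProb d x y 0 = if x = y then 1 else 0 := by
  simp [firstHitProb, posAt_zero, apply_ite]

lemma firstHitProb_succ (x y : Fin d → ℤ) (k : ℕ) :
    firstHitProb d x y (k + 1) =
      markovOp d (fun z ↦ if 0 < k ∧ z = y then 0 else firstHitProb d z y k) x := by
  simp only [firstHitProb_eq_card_div, card_isFirstHit_succ, markovOp_apply, Nat.cast_sum,
    Nat.cast_ite, Nat.cast_zero, sum_div, mul_sum, pow_succ]
  refine sum_congr rfl fun s _ ↦ ?_
  split_ifs <;> ring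

lemma firstHitProb_nonneg (x y : Fin d → ℤ) (k : ℕ) : 0 ≤ firstHitProb d x y k := by
  unfold firstHitProb; positivity

/-- `ℙ_x(τ_y ≤ n)`: the probability that the walk started at `x` visits `y` at one of the times
`1, …, n`. -/
noncomputable def hitProbBy (d n : ℕ) (x y : Fin d → ℤ) : ℝ :=
  ∑ k ∈ range n, firstHitProb d x y (k + 1)

/-- `ℙ_x(τ_y < ∞)`: the probability that the walk started at `x` visits `y` at some time `k ≥ 1`. -/
noncomputable def hitProb (d : ℕ) (x y : Fin d → ℤ) : ℝ :=
  ∑' k : ℕ, firstHitProb d x y (k + 1)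

lemma gamma_eq_one_sub_hitProb : gamma d = 1 - hitProb d 0 0 := rfl

lemma hitProbBy_zero (x y : Fin d → ℤ) : hitProbBy d 0 x y = 0 := sum_range_zero _

lemma hitProbBy_nonneg (n : ℕ) (x y : Fin d → ℤ) : 0 ≤ hitProbBy d n x y :=
  sum_nonneg fun k _ ↦ firstHitProb_nonneg x y (k + 1)

lemma hitProbBy_succ (n : ℕ) (x y : Fin d → ℤ) :
    hitProbBy d (n + 1) x y =
      markovOp d (fun z ↦ if z = y then 1 else hitProbBy d n z y) x := by
  have hdecomp : (fun z ↦ if z = y then 1 else hitProbBy d n z y) =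
      ∑ k ∈ range (n + 1), fun z ↦ if 0 < k ∧ z = y then 0 else firstHitProb d z y k := by
    ext z
    rw [Finset.sum_apply, sum_range_succ']
    by_cases hz : z = y <;> simp [hz, hitProbBy, firstHitProb_zero]
  rw [hdecomp, map_sum, Finset.sum_apply]
  exact sum_congr rfl fun k _ ↦ firstHitProb_succ x y k

lemma hitProbBy_le_one [NeZero d] (n : ℕ) (x y : Fin d → ℤ) : hitProbBy d n x y ≤ 1 := by
  induction n generalizing x with
  | zero => exact (hitProbBy_zero x y).trans_le zero_le_one
  | succ n ih =>
    have hle : (fun z ↦ if z = y then 1 else hitProbBy d n z y) ≤ fun _ ↦ 1 := fun z ↦ by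
      beta_reduce
      split_ifs
      exacts [le_rfl, ih z]
    calc hitProbBy d (n + 1) x y = markovOp d _ x := hitProbBy_succ n x y
      _ ≤ markovOp d (fun _ ↦ 1) x := markovOp_mono hle x
      _ = 1 := congrFun (markovOp_const 1) x

lemma tendsto_hitProbBy [NeZero d] (x y : Fin d → ℤ) :
    Tendsto (fun n ↦ hitProbBy d n x y) atTop (𝓝 (hitProb d x y)) :=
  (summable_of_sum_range_le (fun k ↦ firstHitProb_nonneg x y (k + 1))
    fun n ↦ hitProbBy_le_one n x y).hasSum.tendsto_sum_nat

variable [NeZero d] {f : (Fin d → ℤ) → ℝ} {y : Fin d → ℤ} {r C : ℝ}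

lemma markovOp_le_mul_hitProbBy_add (hr0 : 0 ≤ r) (hr1 : r ≤ 1) (hy : 0 ≤ f y)
    (hC : ∀ x, f x ≤ C) (h : ∀ x, x ≠ y → f x ≤ r * markovOp d f x) (n : ℕ) (x : Fin d → ℤ) :
    markovOp d f x ≤ f y * hitProbBy d n x y + C * r ^ n := by
  induction n generalizing x with
  | zero =>
    rw [hitProbBy_zero, mul_zero, zero_add, pow_zero, mul_one, ← congrFun (markovOp_const C) x]
    exact markovOp_mono hC x
  | succ n ih =>
    have hstep (z : Fin d → ℤ) :
        f z ≤ f y * (if z = y then 1 else hitProbBy d n z y) + C * r ^ (n + 1) := by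
      split_ifs with hz
      · have hC0 : 0 ≤ C := hy.trans (hC y)
        rw [hz, mul_one]
        exact le_add_of_nonneg_right (by positivity)
      · have hhit : 0 ≤ f y * hitProbBy d n z y := mul_nonneg hy (hitProbBy_nonneg n z y)
        calc f z ≤ r * (f y * hitProbBy d n z y + C * r ^ n) :=
              (h z hz).trans (mul_le_mul_of_nonneg_left (ih z) hr0)
          _ = r * (f y * hitProbBy d n z y) + C * r ^ (n + 1) := by ring
          _ ≤ f y * hitProbBy d n z y + C * r ^ (n + 1) := by
              linarith [mul_le_of_le_one_left hhit hr1]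
    have hlin : markovOp d
        (f y • (fun z ↦ if z = y then 1 else hitProbBy d n z y) + fun _ ↦ C * r ^ (n + 1)) x =
          f y * hitProbBy d (n + 1) x y + C * r ^ (n + 1) := by
      rw [map_add, map_smul, markovOp_const, hitProbBy_succ, Pi.add_apply, Pi.smul_apply,
        smul_eq_mul]
    exact hlin ▸ markovOp_mono hstep x

lemma markovOp_le_mul_hitProb (hr0 : 0 ≤ r) (hr1 : r < 1) (hy : 0 ≤ f y) (hC : ∀ x, f x ≤ C)
    (h : ∀ x, x ≠ y → f x ≤ r * markovOp d f x) (x : Fin d → ℤ) :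
    markovOp d f x ≤ f y * hitProb d x y := by
  have hlim : Tendsto (fun n ↦ f y * hitProbBy d n x y + C * r ^ n) atTop
      (𝓝 (f y * hitProb d x y + C * 0)) :=
    ((tendsto_hitProbBy x y).const_mul _).add
      ((tendsto_pow_atTop_nhds_zero_of_lt_one hr0 hr1).const_mul C)
  rw [mul_zero, add_zero] at hlim
  exact ge_of_tendsto' hlim fun n ↦ markovOp_le_mul_hitProbBy_add hr0 hr1.le hy hC h n x

end Hitting

lemma not_balanceEq_of_mul_nonpos [NeZero d] {ε : ℝ} {ν : (Fin d → ℤ) → ℝ}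
    (hν : IsProbMeasure d ν) (hu : ε * ν 0 ≤ 0) : ¬ BalanceEq d ε ν := by
  intro hbal
  have hzero : ν = 0 := eq_zero_of_markovOp_le_off (y := 0) hν.1 hν.2.summable fun x hx ↦ by
    rw [balanceEq_iff_markovOp.1 hbal x hx]
    exact mul_le_of_le_one_left (hν.1 x) (by linarith)
  exact zero_ne_one (hasSum_zero.unique (hzero ▸ hν.2))

lemma not_balanceEq_of_mul_pos [NeZero d] {ε : ℝ} {ν : (Fin d → ℤ) → ℝ}
    (hν : IsProbMeasure d ν) (hu : 0 < ε * ν 0) (hεγ : ε ≤ gamma d) : ¬ BalanceEq d ε ν := by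
  intro hbal
  rw [balanceEq_iff_markovOp] at hbal
  rw [gamma_eq_one_sub_hitProb] at hεγ
  have hν0 : 0 < ν 0 := (hν.1 0).lt_of_ne' (right_ne_zero_of_mul hu.ne')
  have hu1 : 1 < 1 + ε * ν 0 := lt_add_of_pos_right 1 hu
  have hmass : (1 + ε * ν 0) * ν 0 - markovOp d ν 0 = ε * ν 0 := by
    simpa using mul_sub_markovOp_eq_of_eq_mul_off hν.2 hbal
  have hhit : markovOp d ν 0 ≤ ν 0 * hitProb d 0 0 :=
    markovOp_le_mul_hitProb (inv_nonneg.2 (zero_le_one.trans hu1.le)) (inv_lt_one_of_one_lt₀ hu1)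
      (hν.1 0) (fun x ↦ le_hasSum hν.2 x fun z _ ↦ hν.1 z)
      (fun x hx ↦ by rw [hbal x hx, inv_mul_cancel_left₀ (zero_lt_one.trans hu1).ne']) 0
  have hescape : ν 0 * ε ≤ ν 0 * (1 - hitProb d 0 0) := mul_le_mul_of_nonneg_left hεγ hν0.le
  linarith [mul_pos hu hν0]

end CBRW

open CBRW in
theorem no_balance_probability_measure_of_le_gamma_general
    (d : ℕ) (hd : 1 ≤ d) (ε : ℝ) (hεγ : ε ≤ gamma d) :
    ¬ ∃ ν : (Fin d → ℤ) → ℝ, IsProbMeasure d ν ∧ BalanceEq d ε ν := by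
  have : NeZero d := ⟨Nat.one_le_iff_ne_zero.1 hd⟩
  rintro ⟨ν, hν, hbal⟩
  rcases le_or_gt (ε * ν 0) 0 with hu | hu
  · exact not_balanceEq_of_mul_nonpos hν hu hbal
  · exact not_balanceEq_of_mul_pos hν hu hεγ hbal

open CBRW in
/-- Theorem 1.3(i): if `0 ≤ ε ≤ γ_d`, there is no probability measure on `ℤ^d`
satisfying the balance equation with parameter `ε`. -/
theorem no_balance_probability_measure_of_le_gamma
    (d : ℕ) (hd : 1 ≤ d) (ε : ℝ) (hε0 : 0 ≤ ε) (hεγ : ε ≤ gamma d) :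
    ¬ ∃ ν : (Fin d → ℤ) → ℝ, IsProbMeasure d ν ∧ BalanceEq d ε ν :=
  no_balance_probability_measure_of_le_gamma_general d hd ε hεγ
end

section
/- Let d ≥ 1 and ε ≥ 0. Every probability measure ν on ℤ^d satisfying the balance equation with parameter ε has ν_0 > 0. (Indeed, if ν_0 = 0 the balance equation forces ν to be a bounded harmonic function on ℤ^d, hence constant, contradicting Σ_x ν_x = 1.) -/
open Finset

/-!
If `ν 0 = 0`, then `1 + ε * ν 0 = 1`, so `ν` is harmonic away from the origin. Being summable, `ν`
tends to `0` at infinity; were it positive somewhere, it would attain a positive maximum, and only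
at finitely many points. None of these is the origin, so the mean value property holds at each of
them and makes the set of maximizers stable under translation by `e i`, hence infinite. Thus
`ν ≤ 0`, and the same argument applied to `-ν` gives `ν = 0`, contradicting total mass `1`.
-/

namespace CBRW

open Filter Topology

section SuperlevelSets

variable {α β : Type*} [LinearOrder β] [TopologicalSpace β] [ClosedIciTopology β]
  {f : α → β} {l : β}

theorem finite_setOf_le_of_tendsto_cofinite (hf : Tendsto f cofinite (𝓝 l)) {c : β}
    (hc : l < c) : {x | c ≤ f x}.Finite := by
  simpa only [eventually_cofinite, not_lt] using hf.eventually_lt_const hc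

theorem exists_forall_apply_le_of_tendsto_cofinite (hf : Tendsto f cofinite (𝓝 l)) {a : α}
    (ha : l < f a) : ∃ q, ∀ x, f x ≤ f q := by
  obtain ⟨q, hq, hmax⟩ := Set.exists_max_image _ f
    (finite_setOf_le_of_tendsto_cofinite hf ha) ⟨a, le_refl (f a)⟩
  exact ⟨q, fun x => (le_total (f a) (f x)).elim (hmax x) fun hx => hx.trans hq⟩

end SuperlevelSets

theorem infinite_of_forall_add_mem {G : Type*} [AddLeftCancelMonoid G] {A : Set G} {g : G}
    (hg : ¬IsOfFinAddOrder g) (hA : A.Nonempty) (hadd : ∀ x ∈ A, x + g ∈ A) : A.Infinite := by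
  obtain ⟨x, hx⟩ := hA
  have hmem (n : ℕ) : x + n • g ∈ A := by
    induction n with
    | zero => simpa only [zero_nsmul, add_zero] using hx
    | succ n ih => simpa only [succ_nsmul, add_assoc] using hadd _ ih
  exact Set.infinite_of_injective_forall_mem
    ((add_right_injective x).comp (injective_nsmul_iff_not_isOfFinAddOrder.2 hg)) hmem

section MaximumPrinciple

variable {G ι : Type*} [Fintype ι] {v : ι → G} {f : G → ℝ}

/-- Discrete subharmonicity at `x` with respect to the steps `v`: the value `f x` is at most the
mean of the values `f (x + v i)`. The inequality is multiplied by the number of steps to avoid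
a division. -/
def IsSubharmonicAt [Add G] (v : ι → G) (f : G → ℝ) (x : G) : Prop :=
  Fintype.card ι • f x ≤ ∑ i, f (x + v i)

theorem IsSubharmonicAt.apply_add_eq [Add G] {x : G} (hf : IsSubharmonicAt v f x)
    (hmax : ∀ y, f y ≤ f x) (i : ι) : f (x + v i) = f x := by
  have hle : ∀ j ∈ univ, f (x + v j) ≤ f x := fun j _ => hmax _
  have hsum : ∑ j, f (x + v j) = ∑ _j : ι, f x :=
    (sum_le_sum hle).antisymm (by rwa [sum_const, card_univ])
  exact (sum_eq_sum_iff_of_le hle).1 hsum i (mem_univ i)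

theorem apply_le_of_isSubharmonicAt_of_tendsto_cofinite [AddLeftCancelMonoid G] {l : ℝ}
    (hlim : Tendsto f cofinite (𝓝 l)) (hf : ∀ x, l < f x → IsSubharmonicAt v f x) {i : ι}
    (hi : ¬IsOfFinAddOrder (v i)) (x : G) : f x ≤ l := by
  by_contra! hx
  obtain ⟨q, hmax⟩ := exists_forall_apply_le_of_tendsto_cofinite hlim hx
  have hq : l < f q := hx.trans_le (hmax x)
  refine infinite_of_forall_add_mem (A := {y | f q ≤ f y}) hi ⟨q, le_refl (f q)⟩ (fun y hy => ?_)
    (finite_setOf_le_of_tendsto_cofinite hlim hq)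
  exact hy.trans_eq
    ((hf y (hq.trans_le hy)).apply_add_eq (fun z => (hmax z).trans hy) i).symm

end MaximumPrinciple

section BalanceEq

variable {d : ℕ} {ε : ℝ} {ν : (Fin d → ℤ) → ℝ}

theorem sum_apply_add_dir (ν : (Fin d → ℤ) → ℝ) (x : Fin d → ℤ) :
    ∑ s, ν (x + dir d s) = ∑ i, (ν (x + e d i) + ν (x - e d i)) := by
  simp [Fintype.sum_prod_type, dir, sub_eq_add_neg]

theorem not_isOfFinAddOrder_dir (s : Fin d × Bool) : ¬IsOfFinAddOrder (dir d s) := by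
  refine not_isOfFinAddOrder_of_isAddTorsionFree ?_
  cases hs : s.2 <;> simp [dir, e, hs]

theorem BalanceEq.neg (hν : BalanceEq d ε ν) : BalanceEq d (-ε) (-ν) := by
  intro x hx
  simpa only [Pi.neg_apply, neg_mul, mul_neg, neg_neg, ← neg_add, sum_neg_distrib, neg_inj]
    using hν x hx

theorem BalanceEq.isSubharmonicAt_dir (hν : BalanceEq d ε ν) (h₀ : ν 0 = 0) {x : Fin d → ℤ}
    (hx : x ≠ 0) : IsSubharmonicAt (dir d) ν x := by
  have hd : (d : ℝ) ≠ 0 := by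
    intro h
    obtain rfl := Nat.cast_eq_zero.1 h
    exact hx (Subsingleton.elim x 0)
  have hmean : ν x = 1 / (2 * (d : ℝ)) * ∑ s, ν (x + dir d s) := by
    simpa only [h₀, mul_zero, add_zero, one_mul, sum_apply_add_dir] using hν x hx
  have hsum : 2 * (d : ℝ) * ν x = ∑ s, ν (x + dir d s) := by
    rw [hmean]
    field_simp
  have hcard : (Fintype.card (Fin d × Bool) : ℝ) = 2 * d := by
    simp [mul_comm]
  rw [IsSubharmonicAt, nsmul_eq_mul, hcard, hsum]

theorem BalanceEq.nonpos_of_tendsto_cofinite (hν : BalanceEq d ε ν) (h₀ : ν 0 = 0)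
    (hlim : Tendsto ν cofinite (𝓝 0)) : ν ≤ 0 := by
  intro x
  by_cases hx : x = 0
  · exact (hx ▸ h₀).le
  obtain ⟨i, -⟩ := Function.ne_iff.1 hx
  refine apply_le_of_isSubharmonicAt_of_tendsto_cofinite hlim (fun y hy => ?_)
    (not_isOfFinAddOrder_dir (i, true)) x
  exact hν.isSubharmonicAt_dir h₀ fun hy₀ => hy.ne' (hy₀ ▸ h₀)

end BalanceEq

theorem IsProbMeasure.tendsto_cofinite {d : ℕ} {ν : (Fin d → ℤ) → ℝ} (hν : IsProbMeasure d ν) :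
    Tendsto ν cofinite (𝓝 0) :=
  hν.2.summable.tendsto_cofinite_zero

theorem IsProbMeasure.ne_zero {d : ℕ} {ν : (Fin d → ℤ) → ℝ} (hν : IsProbMeasure d ν) :
    ν ≠ 0 := by
  rintro rfl
  exact zero_ne_one (hasSum_zero.unique hν.2)

end CBRW

open CBRW Filter Topology in
theorem balance_probability_measure_pos_at_origin_general {d : ℕ} {ε : ℝ}
    {ν : (Fin d → ℤ) → ℝ} (hlim : Tendsto ν cofinite (𝓝 0)) (hne : ν ≠ 0)
    (hbal : BalanceEq d ε ν) : ν 0 ≠ 0 := by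
  intro h₀
  have hle : ν ≤ 0 := hbal.nonpos_of_tendsto_cofinite h₀ hlim
  have hge : -ν ≤ 0 := hbal.neg.nonpos_of_tendsto_cofinite
    (by rw [Pi.neg_apply, h₀, neg_zero]) (neg_zero (G := ℝ) ▸ hlim.neg)
  exact hne (hle.antisymm (neg_nonpos.1 hge))

open CBRW in
/-- Every probability measure on `ℤ^d` satisfying the balance equation with
parameter `ε ≥ 0` puts positive mass at the origin. -/
theorem balance_probability_measure_pos_at_origin
    (d : ℕ) (hd : 1 ≤ d) (ε : ℝ) (hε : 0 ≤ ε) (ν : (Fin d → ℤ) → ℝ)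
    (hν : IsProbMeasure d ν) (hbal : BalanceEq d ε ν) :
    0 < ν 0 := by
  exact (hν.1 0).lt_of_ne'
    (balance_probability_measure_pos_at_origin_general hν.tendsto_cofinite hν.ne_zero hbal)
end

section
/- Let d ≥ 1, ε ≥ 0, and let ν be a probability measure on ℤ^d satisfying the balance equation with parameter ε. Then ν also satisfies the balance equation at the origin: (1 − ε(1 − ν_0)) ν_0 = (1/(2d)) Σ_{i=1}^d (ν_{e_i} + ν_{−e_i}). -/
open Finset

/-!
Translating `ν` does not change its total mass, so `ν` and its average over nearest neighbours have
the same mass `m`. Summing the balance equation over all `x ≠ 0` therefore determines the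
neighbour average at `0`: it is `m - (1 + ε ν 0) (m - ν 0) = (1 - ε (m - ν 0)) ν 0`.
-/

namespace CBRW

section HasSum

variable {M : Type*} [AddCommMonoid M] [TopologicalSpace M] [ContinuousAdd M]

theorem hasSum_sum_comp_add_right {G ι : Type*} [AddGroup G] {f : G → M} {m : M}
    (hf : HasSum f m) (s : Finset ι) (v : ι → G) :
    HasSum (fun x => ∑ i ∈ s, f (x + v i)) (#s • m) := by
  rw [← Finset.sum_const]
  exact hasSum_sum fun i _ => (Equiv.addRight (v i)).hasSum_iff.mpr hf

theorem add_apply_eq_add_apply_of_hasSum_of_eq_off {α : Type*} [T2Space M] {f g : α → M} {a b : M}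
    (hf : HasSum f a) (hg : HasSum g b) (x₀ : α) (hfg : ∀ x, x ≠ x₀ → f x = g x) :
    a + g x₀ = b + f x₀ := by
  classical
  have hupdate : Function.update f x₀ (g x₀) = g := Function.update_eq_iff.mpr ⟨rfl, hfg⟩
  exact hf.update' x₀ (g x₀) (hupdate.symm ▸ hg)

end HasSum

/-- The average of `ν` over the `2d` nearest neighbours of `x` in `ℤ^d`, i.e. the right-hand side of
the balance equation at `x`. -/
noncomputable def neighborMean (d : ℕ) (ν : (Fin d → ℤ) → ℝ) (x : Fin d → ℤ) : ℝ :=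
  (1 / (2 * (d : ℝ))) * ∑ i : Fin d, (ν (x + e d i) + ν (x - e d i))

theorem neighborMean_zero (d : ℕ) (ν : (Fin d → ℤ) → ℝ) :
    neighborMean d ν 0 = (1 / (2 * (d : ℝ))) * ∑ i : Fin d, (ν (e d i) + ν (-(e d i))) := by
  simp only [neighborMean, zero_add, zero_sub]

theorem hasSum_neighborMean {d : ℕ} (hd : d ≠ 0) {ν : (Fin d → ℤ) → ℝ} {m : ℝ}
    (hν : HasSum ν m) : HasSum (neighborMean d ν) m := by
  have hforward : HasSum (fun x => ∑ i, ν (x + e d i)) (d • m) := by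
    simpa only [Finset.card_fin] using hasSum_sum_comp_add_right hν Finset.univ (e d)
  have hbackward : HasSum (fun x => ∑ i, ν (x - e d i)) (d • m) := by
    simpa only [Finset.card_fin, sub_eq_add_neg] using
      hasSum_sum_comp_add_right hν Finset.univ fun i => -e d i
  have hmass : 1 / (2 * (d : ℝ)) * (d • m + d • m) = m := by
    rw [nsmul_eq_mul]
    field_simp
    ring
  unfold neighborMean
  simpa only [Finset.sum_add_distrib, hmass] using
    (hforward.add hbackward).mul_left (1 / (2 * (d : ℝ)))

end CBRW

open CBRW in
theorem balance_probability_measure_balance_at_origin_general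
    {d : ℕ} (hd : d ≠ 0) {ε m : ℝ} {ν : (Fin d → ℤ) → ℝ}
    (hν : HasSum ν m) (hbal : BalanceEq d ε ν) :
    (1 - ε * (m - ν 0)) * ν 0 =
      (1 / (2 * (d : ℝ))) * ∑ i : Fin d, (ν (e d i) + ν (-(e d i))) := by
  rw [← neighborMean_zero]
  have hmass : (1 + ε * ν 0) * m + neighborMean d ν 0 = m + (1 + ε * ν 0) * ν 0 :=
    add_apply_eq_add_apply_of_hasSum_of_eq_off (hν.mul_left (1 + ε * ν 0))
      (hasSum_neighborMean hd hν) 0 hbal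
  linear_combination -hmass

open CBRW in
/-- Any probability measure satisfying the balance equation with parameter `ε`
also satisfies the balance equation at the origin:
`(1 - ε (1 - ν 0)) ν 0 = (1/(2d)) ∑ i (ν (e i) + ν (-e i))`. -/
theorem balance_probability_measure_balance_at_origin
    (d : ℕ) (hd : 1 ≤ d) (ε : ℝ) (hε : 0 ≤ ε) (ν : (Fin d → ℤ) → ℝ)
    (hν : IsProbMeasure d ν) (hbal : BalanceEq d ε ν) :
    (1 - ε * (1 - ν 0)) * ν 0 =
      (1 / (2 * (d : ℝ))) * ∑ i : Fin d, (ν (e d i) + ν (-(e d i))) :=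
  balance_probability_measure_balance_at_origin_general (Nat.one_le_iff_ne_zero.mp hd) hν.2 hbal
end

section
/- Let d ≥ 1 and ε > 0, and let ν : ℤ^d → [0,∞) be a bounded function satisfying the balance equation with parameter ε and with ν_0 > 0. Fix x ∈ ℤ^d with x ≠ 0 and let (S_n)_{n≥0} be the simple random walk on ℤ^d started at x, with τ_0 = inf{n ≥ 1 : S_n = 0}. Then the process M_n := ν_{S_{n∧τ_0}} · (1 + ε ν_0)^{−(n∧τ_0)}, n ≥ 0, is a bounded martingale with respect to the filtration generated by the increments (ξ_1, …, ξ_n). -/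
open Finset

namespace CBRW

/-- The position at time `n` of the simple random walk started at `x` driven by the
infinite word of increments `w`. -/
def posInf (d : ℕ) (x : Fin d → ℤ) (w : ℕ → Fin d × Bool) (n : ℕ) : Fin d → ℤ :=
  x + ∑ i ∈ Finset.range n, dir d (w i)

open Classical in
/-- `n ∧ τ_0`: the minimum of `n` and the first time `j ≥ 1` at which the walk started at
`x` and driven by `w` is at the origin. -/
noncomputable def stopIdx (d : ℕ) (x : Fin d → ℤ) (w : ℕ → Fin d × Bool) (n : ℕ) : ℕ :=
  if h : ∃ j, 1 ≤ j ∧ j ≤ n ∧ posInf d x w j = 0 then Nat.find h else n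

end CBRW

/-!
Off the origin, the balance equation says that averaging `ν` over one step of the walk multiplies it
by `1 + ε ν 0`; dividing by `(1 + ε ν 0) ^ n` compensates this factor, so `ν S_n (1 + ε ν 0) ^ (-n)`
is a martingale until the walk hits `0`. Optional stopping at that time then gives a martingale,
bounded because the discount factors are at most `1`.
-/

namespace CBRW

open MeasureTheory Function
open scoped BigOperators

section HittingTime

variable {α ι Ω : Type*} {A : Set α}

lemma hittingBtwn_congr [Preorder ι] [InfSet ι] {X : ι → Ω → α} {m n : ι} {ω ω' : Ω}
    (h : ∀ j ∈ Set.Icc m n, X j ω = X j ω') :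
    hittingBtwn X A m n ω = hittingBtwn X A m n ω' := by
  have hmem : ∀ j ∈ Set.Icc m n, (X j ω ∈ A ↔ X j ω' ∈ A) := fun j hj => by rw [h j hj]
  have hhits : Set.Icc m n ∩ {j | X j ω ∈ A} = Set.Icc m n ∩ {j | X j ω' ∈ A} :=
    Set.ext fun j => and_congr_right (hmem j)
  have hexists : (∃ j ∈ Set.Icc m n, X j ω ∈ A) ↔ ∃ j ∈ Set.Icc m n, X j ω' ∈ A :=
    exists_congr fun j => and_congr_right (hmem j)
  rw [hittingBtwn, hittingBtwn, hhits]
  classical exact if_congr hexists rfl rfl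

lemma hittingBtwn_eq_end_of_forall_notMem [ConditionallyCompleteLinearOrder ι] {X : ι → Ω → α}
    {m n : ι} {ω : Ω} (h : ∀ j ∈ Set.Ico m n, X j ω ∉ A) : hittingBtwn X A m n ω = n :=
  (hittingBtwn_le ω).antisymm <| not_lt.1 fun hlt =>
    let ⟨j, hj, hjA⟩ := (hittingBtwn_lt_iff n le_rfl).1 hlt
    h j hj hjA

end HittingTime

section OptionalStopping

variable {α E ι : Type*}

/-- A process driven by a word of letters is non-anticipating (adapted to the filtration of the
letters) if its value at time `n` is a function of the first `n` letters, those with indices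
`0, …, n - 1`. -/
def IsNonanticipating (X : ℕ → (ℕ → ι) → α) : Prop :=
  ∀ n, DependsOn (X n) (Set.Iio n)

/-- The process `N` stopped when `X` first enters `A` at a time `≥ m`: its value at time `n` is
`N` at time `n ∧ inf {j ≥ m | X j ∈ A}`. -/
noncomputable def stoppedAtHit (X : ℕ → (ℕ → ι) → α) (A : Set α) (m : ℕ) (N : ℕ → (ℕ → ι) → E)
    (n : ℕ) (w : ℕ → ι) : E :=
  N (hittingBtwn X A m n w) w

lemma IsNonanticipating.apply_update {X : ℕ → (ℕ → ι) → α} (hX : IsNonanticipating X) {j n : ℕ}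
    (hjn : j ≤ n) (w : ℕ → ι) (s : ι) : X j (update w n s) = X j w :=
  hX j fun _ hi => update_of_ne (hi.trans_le hjn).ne _ _

lemma IsNonanticipating.hittingBtwn_update {X : ℕ → (ℕ → ι) → α} (hX : IsNonanticipating X)
    (A : Set α) (m n : ℕ) (w : ℕ → ι) (s : ι) :
    hittingBtwn X A m n (update w n s) = hittingBtwn X A m n w :=
  hittingBtwn_congr fun _ hj => hX.apply_update hj.2 w s

theorem expect_stoppedAtHit_update [Fintype ι] [AddCommMonoid E] [Module ℚ≥0 E]
    {X : ℕ → (ℕ → ι) → α} {N : ℕ → (ℕ → ι) → E} {A : Set α} {m n : ℕ} {w : ℕ → ι}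
    (hX : IsNonanticipating X) (hN : IsNonanticipating N)
    (hmart : (∀ j ∈ Set.Icc m n, X j w ∉ A) → 𝔼 s, N (n + 1) (update w n s) = N n w) :
    𝔼 s, stoppedAtHit X A m N (n + 1) (update w n s) = stoppedAtHit X A m N n w := by
  by_cases hhit : ∃ j ∈ Set.Icc m n, X j w ∈ A
  · have : Nonempty ι := ⟨w 0⟩
    have hstopped (s : ι) :
        stoppedAtHit X A m N (n + 1) (update w n s) = stoppedAtHit X A m N n w := by
      have hhit' : ∃ j ∈ Set.Icc m n, X j (update w n s) ∈ A :=
        hhit.imp fun j ⟨hj, hjA⟩ => ⟨hj, by rwa [hX.apply_update hj.2]⟩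
      rw [stoppedAtHit, ← hittingBtwn_eq_hittingBtwn_of_exists n.le_succ hhit',
        hX.hittingBtwn_update, hN.apply_update (hittingBtwn_le w), stoppedAtHit]
    simp only [hstopped, Fintype.expect_const]
  · have havoid : ∀ j ∈ Set.Icc m n, X j w ∉ A := fun j hj hjA => hhit ⟨j, hj, hjA⟩
    have hend_succ (s : ι) : hittingBtwn X A m (n + 1) (update w n s) = n + 1 :=
      hittingBtwn_eq_end_of_forall_notMem fun j hj => by
        have hjn : j ≤ n := Nat.lt_succ_iff.1 hj.2
        rw [hX.apply_update hjn]
        exact havoid j ⟨hj.1, hjn⟩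
    have hend : hittingBtwn X A m n w = n :=
      hittingBtwn_eq_end_of_forall_notMem fun j hj => havoid j (Set.Ico_subset_Icc_self hj)
    simp only [stoppedAtHit, hend_succ, hend]
    exact hmart havoid

end OptionalStopping

section Walk

variable {ι G 𝕜 : Type*} [AddCommMonoid G]

/-- The position at time `n` of the walk started at `x` whose `i`-th increment is the step encoded
by the `i`-th letter of the word `w`. -/
def walk (step : ι → G) (x : G) (n : ℕ) (w : ℕ → ι) : G :=
  x + ∑ i ∈ range n, step (w i)

/-- The process `ν(S_n) r⁻ⁿ`, where `S` is the walk started at `x`. -/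
def discountedWalk [DivisionRing 𝕜] (step : ι → G) (x : G) (ν : G → 𝕜) (r : 𝕜) (n : ℕ)
    (w : ℕ → ι) : 𝕜 :=
  ν (walk step x n w) * (r ^ n)⁻¹

@[simp]
lemma walk_zero (step : ι → G) (x : G) (w : ℕ → ι) : walk step x 0 w = x := by
  simp [walk]

lemma isNonanticipating_walk (step : ι → G) (x : G) : IsNonanticipating (walk step x) :=
  fun _ _ _ h => congrArg (x + ·) <| sum_congr rfl fun i hi => by rw [h i (mem_range.1 hi)]

lemma isNonanticipating_discountedWalk [DivisionRing 𝕜] (step : ι → G) (x : G) (ν : G → 𝕜)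
    (r : 𝕜) : IsNonanticipating (discountedWalk step x ν r) :=
  fun n _ _ h => by rw [discountedWalk, isNonanticipating_walk step x n h, discountedWalk]

lemma walk_succ (step : ι → G) (x : G) (n : ℕ) (w : ℕ → ι) :
    walk step x (n + 1) w = walk step x n w + step (w n) := by
  rw [walk, sum_range_succ, ← add_assoc, walk]

lemma walk_succ_update (step : ι → G) (x : G) (n : ℕ) (w : ℕ → ι) (s : ι) :
    walk step x (n + 1) (update w n s) = walk step x n w + step s := by
  rw [walk_succ, (isNonanticipating_walk step x).apply_update le_rfl, update_self]

lemma walk_notMem_of_forall_Icc_notMem {step : ι → G} {x : G} {A : Set G} {n : ℕ} {w : ℕ → ι}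
    (hx : x ∉ A) (h : ∀ j ∈ Set.Icc 1 n, walk step x j w ∉ A) : walk step x n w ∉ A := by
  rcases n.eq_zero_or_pos with rfl | hn
  · simpa using hx
  · exact h n ⟨hn, le_rfl⟩

lemma expect_discountedWalk_update [Fintype ι] [Field 𝕜] [CharZero 𝕜] {step : ι → G} {x : G}
    {ν : G → 𝕜} {r : 𝕜} {n : ℕ} {w : ℕ → ι} (hr : r ≠ 0)
    (heigen : 𝔼 s, ν (walk step x n w + step s) = r * ν (walk step x n w)) :
    𝔼 s, discountedWalk step x ν r (n + 1) (update w n s) = discountedWalk step x ν r n w := by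
  calc 𝔼 s, discountedWalk step x ν r (n + 1) (update w n s)
      = 𝔼 s, ν (walk step x n w + step s) * (r ^ (n + 1))⁻¹ := by
        simp only [discountedWalk, walk_succ_update]
    _ = r * ν (walk step x n w) * (r ^ (n + 1))⁻¹ := by rw [← expect_mul, heigen]
    _ = discountedWalk step x ν r n w := by
        rw [discountedWalk, pow_succ]
        field_simp

lemma norm_discountedWalk_le [NormedDivisionRing 𝕜] {step : ι → G} {ν : G → 𝕜} {r : 𝕜} {B : ℝ}
    (hB : ∀ y, ‖ν y‖ ≤ B) (hr : 1 ≤ ‖r‖) (x : G) (n : ℕ) (w : ℕ → ι) :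
    ‖discountedWalk step x ν r n w‖ ≤ B := by
  rw [discountedWalk, norm_mul, norm_inv, norm_pow]
  exact (mul_le_of_le_one_right (norm_nonneg _)
    (inv_le_one_of_one_le₀ (one_le_pow₀ hr))).trans (hB _)

end Walk

section SimpleRandomWalk

variable {d : ℕ}

lemma stopIdx_eq_hittingBtwn (x : Fin d → ℤ) (w : ℕ → Fin d × Bool) (n : ℕ) :
    stopIdx d x w n = hittingBtwn (walk (dir d) x) {0} 1 n w := by
  unfold stopIdx
  split_ifs with h
  · have hhit : ∃ j ∈ Set.Icc 1 n, walk (dir d) x j w ∈ ({0} : Set _) :=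
      h.imp fun _ ⟨h1, hn, h0⟩ => ⟨⟨h1, hn⟩, h0⟩
    refine (Nat.find_eq_iff h).2 ⟨⟨le_hittingBtwn_of_exists hhit, hittingBtwn_le w,
      hittingBtwn_mem_set hhit⟩, fun j hj ⟨h1, _, h0⟩ => notMem_of_lt_hittingBtwn hj h1 h0⟩
  · exact (hittingBtwn_eq_end_of_forall_notMem fun j hj h0 => h ⟨j, hj.1, hj.2.le, h0⟩).symm

lemma expect_apply_dir (f : (Fin d → ℤ) → ℝ) :
    𝔼 s, f (dir d s) = 1 / (2 * (d : ℝ)) * ∑ i, (f (e d i) + f (-e d i)) := by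
  rw [Fintype.expect_eq_sum_div_card, Fintype.sum_prod_type]
  simp [dir, div_eq_inv_mul, mul_comm]

lemma BalanceEq.expect_add_dir {ε : ℝ} {ν : (Fin d → ℤ) → ℝ} (hbal : BalanceEq d ε ν)
    {y : Fin d → ℤ} (hy : y ≠ 0) : 𝔼 s, ν (y + dir d s) = (1 + ε * ν 0) * ν y := by
  rw [hbal y hy, expect_apply_dir fun z => ν (y + z)]
  simp only [sub_eq_add_neg]

end SimpleRandomWalk

end CBRW

open CBRW BigOperators in
theorem stopped_process_bounded_martingale_general {ι G 𝕜 : Type*} [Fintype ι] [AddCommMonoid G]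
    [NormedField 𝕜] [CharZero 𝕜] (step : ι → G) (A : Set G) (ν : G → 𝕜) (r : 𝕜)
    (hr : 1 ≤ ‖r‖) (hbdd : ∃ B, ∀ y, ‖ν y‖ ≤ B)
    (heigen : ∀ y ∉ A, 𝔼 s, ν (y + step s) = r * ν y) (x : G) (hx : x ∉ A) :
    (∃ C, ∀ n w, ‖stoppedAtHit (walk step x) A 1 (discountedWalk step x ν r) n w‖ ≤ C) ∧
      ∀ (n : ℕ) (w : ℕ → ι),
        𝔼 s, stoppedAtHit (walk step x) A 1 (discountedWalk step x ν r) (n + 1)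
            (Function.update w n s) =
          stoppedAtHit (walk step x) A 1 (discountedWalk step x ν r) n w := by
  have hr0 : r ≠ 0 := norm_pos_iff.1 (one_pos.trans_le hr)
  refine ⟨hbdd.imp fun B hB n w => norm_discountedWalk_le hB hr x _ w, fun n w => ?_⟩
  refine expect_stoppedAtHit_update (isNonanticipating_walk step x)
    (isNonanticipating_discountedWalk step x ν r) fun havoid => ?_
  exact expect_discountedWalk_update hr0
    (heigen _ (walk_notMem_of_forall_Icc_notMem hx havoid))

open CBRW in
/-- The stopped process `M_n = ν(S_{n ∧ τ_0}) (1 + ε ν 0)^{-(n ∧ τ_0)}` is a bounded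
martingale with respect to the filtration generated by the increments: it is uniformly
bounded, and its average over the `2d` equally likely values of the `(n+1)`-st increment,
given the first `n` increments, equals its current value. -/
theorem stopped_process_bounded_martingale
    (d : ℕ) (hd : 1 ≤ d) (ε : ℝ) (hε : 0 < ε)
    (ν : (Fin d → ℤ) → ℝ) (hν0 : ∀ x, 0 ≤ ν x) (hbdd : ∃ B, ∀ x, ν x ≤ B)
    (hbal : BalanceEq d ε ν) (hpos : 0 < ν 0)
    (x : Fin d → ℤ) (hx : x ≠ 0)
    (M : ℕ → (ℕ → Fin d × Bool) → ℝ)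
    (hM : ∀ n w, M n w =
      ν (posInf d x w (stopIdx d x w n)) * ((1 + ε * ν 0) ^ (stopIdx d x w n))⁻¹) :
    (∃ C, ∀ n w, |M n w| ≤ C) ∧
      ∀ (n : ℕ) (w : ℕ → Fin d × Bool),
        (∑ s : Fin d × Bool, M (n + 1) (Function.update w n s)) / (2 * (d : ℝ)) = M n w := by
  obtain rfl : M = stoppedAtHit (walk (dir d) x) {0} 1
      (discountedWalk (dir d) x ν (1 + ε * ν 0)) := by
    ext n w
    rw [hM, stopIdx_eq_hittingBtwn]
    rfl
  have hr : 1 ≤ ‖1 + ε * ν 0‖ :=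
    (le_add_of_nonneg_right (mul_pos hε hpos).le).trans (Real.le_norm_self _)
  have hnorm : ∃ B, ∀ y, ‖ν y‖ ≤ B := by simpa only [Real.norm_of_nonneg (hν0 _)] using hbdd
  have hcard : (Fintype.card (Fin d × Bool) : ℝ) = 2 * d := by simp [mul_comm]
  simpa only [Fintype.expect_eq_sum_div_card, hcard, Real.norm_eq_abs] using
    stopped_process_bounded_martingale_general (dir d) {0} ν _ hr hnorm
      (fun _ hy => hbal.expect_add_dir hy) x hx
end

section
/- Let d ≥ 1 and ε > 0, and let ν be a probability measure on ℤ^d satisfying the balance equation with parameter ε. Then 1 = ν_0 + ν_0 Σ_{k=1}^∞ (1 + ε ν_0)^{−k} · ℙ_0(τ_0 ≥ k+1), where τ_0 is the first return time to 0 of the simple random walk started at 0. -/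
open Finset

/-!
Write `q = 1 + ε ν_0` and let `M n` be the `ν`-average of the probability of avoiding `0` at times
`1, …, n`. Conditioning on the first step, shifting it onto `ν` and using the balance equation off
`0`, one gets `M (n + 1) = q (M n - ν_0 ℙ_0(τ_0 ≥ n + 1))`. Dividing by `q ^ (n + 1)` and summing,
`∑_{k < n} ν_0 q^{-k} ℙ_0(τ_0 ≥ k + 1) = M 0 - q^{-n} M n`, where `M 0 = 1` and `M` is bounded, so
the identity follows as soon as `q > 1`, that is, `ν_0 > 0`. If `ν_0` vanished, then `ν` would be
subharmonic off `0` and would attain a positive maximum; the set of maximizers, missing `0`, would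
be stable under backward steps and hence contain `0` after all.
-/

namespace RandomWalk

open Filter Topology
open scoped BigOperators

section Avoidance

variable {G S : Type*} [AddGroup G] {v : S → G}

lemma forall_add_partialSum_cons_ne_iff {x y : G} {k : ℕ} (s : S) (w : Fin k → S) :
    (∀ j : Fin (k + 1), x + Fin.partialSum (v ∘ (Fin.cons s w : Fin (k + 1) → S)) j.succ ≠ y) ↔
      x + v s ≠ y ∧ ∀ j : Fin k, x + v s + Fin.partialSum (v ∘ w) j.succ ≠ y := by
  have cons_tail : Fin.tail (v ∘ (Fin.cons s w : Fin (k + 1) → S)) = v ∘ w := rfl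
  simp only [Fin.partialSum_succ', cons_tail, Function.comp_apply, Fin.cons_zero, ← add_assoc]
  rw [Fin.forall_fin_succ, Fin.partialSum_zero, add_zero]

variable [Fintype S]

open Classical in
/-- The probability that the random walk on `G` started at `x`, with i.i.d. increments `v s` for
`s` uniform in `S`, avoids `y` at all times `1, …, k`; it is the proportion of words `w` of length
`k` whose walk, at position `x + v (w 0) + ⋯ + v (w (j - 1))` at time `j`, avoids `y`. -/
noncomputable def avoidanceProb (v : S → G) (x y : G) (k : ℕ) : ℝ :=
  𝔼 w : Fin k → S, if ∀ j : Fin k, x + Fin.partialSum (v ∘ w) j.succ ≠ y then 1 else 0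

lemma avoidanceProb_zero (x y : G) : avoidanceProb v x y 0 = 1 := by
  simp [avoidanceProb]

lemma abs_avoidanceProb_le_one [Nonempty S] (x y : G) (k : ℕ) : |avoidanceProb v x y k| ≤ 1 :=
  (abs_expect_le _ _).trans <| expect_le univ_nonempty fun _ _ ↦ by split_ifs <;> norm_num

lemma avoidanceProb_succ (x y : G) (k : ℕ) :
    avoidanceProb v x y (k + 1) =
      𝔼 s, ({y}ᶜ : Set G).indicator (fun z ↦ avoidanceProb v z y k) (x + v s) := by
  classical
  unfold avoidanceProb
  rw [← Fintype.expect_equiv (Fin.consEquiv fun _ ↦ S) _ _ fun _ ↦ rfl, ← univ_product_univ,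
    expect_product]
  refine expect_congr rfl fun s _ ↦ ?_
  by_cases hs : x + v s = y <;>
    simp [Fin.consEquiv, forall_add_partialSum_cons_ne_iff, hs]

end Avoidance

section Balance

/-- `ν` is balanced off `o` with eigenvalue `q`: at every point other than `o`, `q * ν` is the law
after one step of the walk with increments `v s`, `s` uniform in `S`, and initial law `ν`. For the
simple random walk on `ℤ^d` and `q = 1 + ε ν_0` this is the balance equation. -/
def IsBalanced {G S : Type*} [AddGroup G] [Fintype S] (v : S → G) (o : G) (q : ℝ) (ν : G → ℝ) :
    Prop :=
  ∀ x ≠ o, q * ν x = 𝔼 s, ν (x - v s)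

lemma exists_pos_forall_le_of_tendsto_cofinite {α : Type*} {f : α → ℝ}
    (hf : Tendsto f cofinite (𝓝 0)) {a : α} (ha : 0 < f a) : ∃ m, 0 < f m ∧ ∀ x, f x ≤ f m := by
  have superlevel_finite : {x | f a ≤ f x}.Finite := by
    simpa [eventually_cofinite] using hf.eventually (gt_mem_nhds ha)
  obtain ⟨m, ham, hm⟩ := Set.exists_max_image _ f superlevel_finite ⟨a, le_refl (f a)⟩
  refine ⟨m, ha.trans_le ham, fun x ↦ ?_⟩
  obtain hx | hx := le_total (f a) (f x)
  exacts [hm x hx, hx.trans ham]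

variable {G S : Type*} [AddGroup G] [Fintype S] {v : S → G}

theorem nonpos_of_le_expect_sub (hv : AddSubmonoid.closure (Set.range v) = ⊤) {f : G → ℝ}
    (hf : Tendsto f cofinite (𝓝 0)) {o : G} (ho : f o ≤ 0)
    (hsub : ∀ x ≠ o, f x ≤ 𝔼 s, f (x - v s)) (x : G) : f x ≤ 0 := by
  by_contra! hx
  obtain ⟨m, hm_pos, hm_max⟩ := exists_pos_forall_le_of_tendsto_cofinite hf hx
  have max_sub_step : ∀ s y, f y = f m → f (y - v s) = f m := by
    intro s y hy
    have hyo : y ≠ o := by rintro rfl; linarith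
    by_contra hne
    have : 𝔼 s, f (y - v s) < f m :=
      expect_lt (fun s _ ↦ hm_max _) ⟨s, mem_univ s, (hm_max _).lt_of_ne hne⟩
    linarith [hsub y hyo]
  have max_sub : ∀ g ∈ AddSubmonoid.closure (Set.range v), ∀ y, f y = f m → f (y - g) = f m := by
    intro g hg
    induction hg using AddSubmonoid.closure_induction with
    | mem _ h => obtain ⟨s, rfl⟩ := h; exact max_sub_step s
    | zero => simp
    | add g h _ _ ihg ihh =>
      intro y hy
      rw [sub_add_eq_sub_sub_swap]
      exact ihg _ (ihh y hy)
  have : f o = f m := by simpa using max_sub (-o + m) (hv ▸ AddSubmonoid.mem_top _) m rfl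
  linarith

theorem IsBalanced.pos {o : G} {q : ℝ} {ν : G → ℝ} (hbal : IsBalanced v o q ν) (hq : 1 ≤ q)
    (hv : AddSubmonoid.closure (Set.range v) = ⊤) (hν_nonneg : ∀ x, 0 ≤ ν x)
    (hν_sum : HasSum ν 1) : 0 < ν o := by
  by_contra! ho
  have nonpos : ∀ x, ν x ≤ 0 :=
    nonpos_of_le_expect_sub hv hν_sum.summable.tendsto_cofinite_zero ho fun x hx ↦
      (le_mul_of_one_le_left (hν_nonneg x) hq).trans_eq (hbal x hx)
  linarith [hasSum_le nonpos hν_sum hasSum_zero]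

end Balance

section AvoidanceMass

lemma summable_mul_of_abs_le_one {α : Type*} {ν f : α → ℝ} (hν : Summable ν)
    (hf : ∀ x, |f x| ≤ 1) : Summable fun x ↦ ν x * f x :=
  .of_norm_bounded hν.norm fun x ↦ by
    rw [norm_mul]
    exact mul_le_of_le_one_right (norm_nonneg _) (hf x)

variable {G S : Type*} [AddGroup G] [Fintype S] {v : S → G} {ν : G → ℝ} {o : G}

theorem tsum_mul_expect_add {f : G → ℝ} (h : ∀ s, Summable fun x ↦ ν x * f (x + v s)) :
    ∑' x, ν x * 𝔼 s, f (x + v s) = ∑' x, (𝔼 s, ν (x - v s)) * f x := by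
  have shifted_summable (s : S) : Summable fun x ↦ ν (x - v s) * f x := by
    simpa [Function.comp_def] using (Equiv.subRight (v s)).summable_iff.2 (h s)
  have shifted_tsum (s : S) : ∑' x, ν (x - v s) * f x = ∑' x, ν x * f (x + v s) := by
    simpa using (Equiv.subRight (v s)).tsum_eq fun x ↦ ν x * f (x + v s)
  simp only [Fintype.expect_eq_sum_div_card, mul_div_assoc', div_mul_eq_mul_div, mul_sum, sum_mul,
    tsum_div_const]
  rw [Summable.tsum_finsetSum fun s _ ↦ h s, Summable.tsum_finsetSum fun s _ ↦ shifted_summable s]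
  simp only [shifted_tsum]

/-- The `ν`-mass of the starting points, weighted by the probability that the walk avoids `o` at
all times `1, …, n`: for a probability measure `ν`, this is `ℙ_ν(τ_o ≥ n + 1)`. -/
noncomputable def avoidanceMass (v : S → G) (ν : G → ℝ) (o : G) (n : ℕ) : ℝ :=
  ∑' x, ν x * avoidanceProb v x o n

lemma avoidanceMass_zero : avoidanceMass v ν o 0 = ∑' x, ν x := by
  simp [avoidanceMass, avoidanceProb_zero]

variable [Nonempty S]

lemma abs_avoidanceMass_le (hν : Summable ν) (n : ℕ) :
    |avoidanceMass v ν o n| ≤ ∑' x, |ν x| :=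
  tsum_of_norm_bounded (f := fun x ↦ ν x * avoidanceProb v x o n) hν.abs.hasSum fun x ↦ by
    rw [norm_mul]
    exact mul_le_of_le_one_right (norm_nonneg _) (abs_avoidanceProb_le_one x o n)

variable {q : ℝ}

lemma IsBalanced.avoidanceMass_succ (hbal : IsBalanced v o q ν) (hν : Summable ν) (n : ℕ) :
    avoidanceMass v ν o (n + 1) =
      q * (avoidanceMass v ν o n - ν o * avoidanceProb v o o n) := by
  classical
  set f : G → ℝ := ({o}ᶜ : Set G).indicator fun x ↦ avoidanceProb v x o n
  have abs_f_le_one (x : G) : |f x| ≤ 1 :=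
    (norm_indicator_le_norm_self (fun x ↦ avoidanceProb v x o n) x).trans
      (abs_avoidanceProb_le_one x o n)
  have summand_summable : Summable fun x ↦ ν x * avoidanceProb v x o n :=
    summable_mul_of_abs_le_one hν fun x ↦ abs_avoidanceProb_le_one x o n
  have tsum_mul_f : ∑' x, ν x * f x = avoidanceMass v ν o n - ν o * avoidanceProb v o o n := by
    rw [avoidanceMass, summand_summable.tsum_eq_add_tsum_ite o, add_sub_cancel_left]
    exact tsum_congr fun x ↦ by by_cases hx : x = o <;> simp [f, hx]
  calc avoidanceMass v ν o (n + 1)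
    _ = ∑' x, ν x * 𝔼 s, f (x + v s) := tsum_congr fun x ↦ by rw [avoidanceProb_succ]
    _ = ∑' x, (𝔼 s, ν (x - v s)) * f x :=
      tsum_mul_expect_add fun s ↦ summable_mul_of_abs_le_one hν fun x ↦ abs_f_le_one (x + v s)
    _ = ∑' x, q * (ν x * f x) := tsum_congr fun x ↦ by
      by_cases hx : x = o
      · simp [f, hx]
      · rw [← hbal x hx, mul_assoc]
    _ = q * (avoidanceMass v ν o n - ν o * avoidanceProb v o o n) := by
      rw [tsum_mul_left, tsum_mul_f]

lemma IsBalanced.sum_range_mul_avoidanceProb (hbal : IsBalanced v o q ν) (hq : q ≠ 0)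
    (hν : Summable ν) (n : ℕ) :
    ∑ k ∈ range n, ν o * ((q ^ k)⁻¹ * avoidanceProb v o o k) =
      ∑' x, ν x - (q ^ n)⁻¹ * avoidanceMass v ν o n := by
  induction n with
  | zero => simp [avoidanceMass_zero]
  | succ n ih =>
    rw [sum_range_succ, ih, hbal.avoidanceMass_succ hν]
    field_simp
    ring

theorem IsBalanced.hasSum_mul_avoidanceProb (hbal : IsBalanced v o q ν) (hq : 1 < q)
    (hν : Summable ν) :
    HasSum (fun k ↦ ν o * ((q ^ k)⁻¹ * avoidanceProb v o o k)) (∑' x, ν x) := by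
  have q_pos : 0 < q := zero_lt_one.trans hq
  have inv_pow_summable : Summable fun k : ℕ ↦ (q ^ k)⁻¹ := by
    simpa only [inv_pow] using
      summable_geometric_of_lt_one (inv_nonneg.2 q_pos.le) (inv_lt_one_of_one_lt₀ hq)
  have remainder_tendsto : Tendsto (fun n ↦ (q ^ n)⁻¹ * avoidanceMass v ν o n) atTop (𝓝 0) :=
    inv_pow_summable.tendsto_atTop_zero.zero_mul_isBoundedUnder_le
      (isBoundedUnder_of ⟨_, abs_avoidanceMass_le hν⟩)
  have series_summable : Summable fun k ↦ ν o * ((q ^ k)⁻¹ * avoidanceProb v o o k) :=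
    (summable_mul_of_abs_le_one inv_pow_summable (abs_avoidanceProb_le_one o o)).mul_left (ν o)
  rw [series_summable.hasSum_iff_tendsto_nat]
  simpa only [hbal.sum_range_mul_avoidanceProb q_pos.ne' hν, sub_zero] using
    remainder_tendsto.const_sub (∑' x, ν x)

end AvoidanceMass

end RandomWalk

namespace CBRW

open RandomWalk

lemma closure_range_dir (d : ℕ) : AddSubmonoid.closure (Set.range (dir d)) = ⊤ := by
  refine (AddSubmonoid.eq_top_iff' _).2 fun x ↦ AddSubmonoid.pi_mem_of_single_mem x fun i ↦ ?_
  obtain ⟨n, hn | hn⟩ := (x i).eq_nat_or_neg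
  · have : Pi.single i (x i) = n • dir d (i, true) := by simp [dir, e, hn, ← Pi.single_smul]
    exact this ▸ nsmul_mem (AddSubmonoid.subset_closure (Set.mem_range_self _)) n
  · have : Pi.single i (x i) = n • dir d (i, false) := by
      simp [dir, e, hn, ← Pi.single_smul, Pi.single_neg]
    exact this ▸ nsmul_mem (AddSubmonoid.subset_closure (Set.mem_range_self _)) n

lemma posAt_succ {d k : ℕ} (x : Fin d → ℤ) (w : Fin k → Fin d × Bool) (j : Fin k) :
    posAt d x w (j + 1) = posAt d x w j + dir d (w j) := by
  have split (i : Fin k) : (if (i : ℕ) < j + 1 then dir d (w i) else 0) =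
      (if (i : ℕ) < j then dir d (w i) else 0) + if i = j then dir d (w i) else 0 := by
    grind
  simp only [posAt, split, sum_add_distrib, sum_ite_eq', mem_univ, if_true, add_assoc]

lemma posAt_eq_add_partialSum {d k : ℕ} (x : Fin d → ℤ) (w : Fin k → Fin d × Bool)
    (j : Fin (k + 1)) : posAt d x w j = x + Fin.partialSum (dir d ∘ w) j := by
  induction j using Fin.induction with
  | zero => simp [posAt]
  | succ j ih =>
    rw [Fin.val_succ, posAt_succ, Fin.partialSum_succ, ← add_assoc, ← ih]
    rfl

lemma avoidProb_eq_avoidanceProb (d : ℕ) (x y : Fin d → ℤ) (k : ℕ) :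
    avoidProb d x y k = avoidanceProb (dir d) x y k := by
  have avoids_iff (w : Fin k → Fin d × Bool) : (∀ j, 1 ≤ j → j ≤ k → posAt d x w j ≠ y) ↔
      ∀ j : Fin k, x + Fin.partialSum (dir d ∘ w) j.succ ≠ y := by
    simp only [← posAt_eq_add_partialSum, Fin.forall_iff, Fin.val_succ]
    exact ⟨fun h j hj ↦ h (j + 1) (by omega) hj, fun h j hj hjk ↦ by
      simpa [hj] using h (j - 1) (by omega)⟩
  have card_words : (Fintype.card (Fin k → Fin d × Bool) : ℝ) = (2 * d) ^ k := by
    simp [mul_comm]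
  rw [avoidProb, avoidanceProb, Fintype.expect_eq_sum_div_card, card_words, natCast_card_filter]
  congr! with w
  exact avoids_iff w

lemma BalanceEq.isBalanced {d : ℕ} {ε : ℝ} {ν : (Fin d → ℤ) → ℝ} (h : BalanceEq d ε ν) :
    IsBalanced (dir d) 0 (1 + ε * ν 0) ν := by
  intro x hx
  rw [h x hx, Fintype.expect_eq_sum_div_card, Fintype.sum_prod_type]
  simp [dir, add_comm, mul_comm, div_eq_mul_inv]

end CBRW

open RandomWalk in
theorem balance_probability_measure_sum_identity_general {G S : Type*} [AddGroup G] [Fintype S]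
    [Nonempty S] {v : S → G} (hv : AddSubmonoid.closure (Set.range v) = ⊤) {ε : ℝ} (hε : 0 < ε)
    {ν : G → ℝ} (hν_nonneg : ∀ x, 0 ≤ ν x) (hν_sum : HasSum ν 1) {o : G}
    (hbal : IsBalanced v o (1 + ε * ν o) ν) :
    1 = ν o + ν o * ∑' k : ℕ, ((1 + ε * ν o) ^ (k + 1))⁻¹ * avoidanceProb v o o (k + 1) := by
  have one_le : 1 ≤ 1 + ε * ν o := le_add_of_nonneg_right (mul_nonneg hε.le (hν_nonneg o))
  have ν_pos : 0 < ν o := hbal.pos one_le hv hν_nonneg hν_sum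
  have one_lt : 1 < 1 + ε * ν o := lt_add_of_pos_right 1 (mul_pos hε ν_pos)
  have series := hbal.hasSum_mul_avoidanceProb one_lt hν_sum.summable
  have split_first := series.summable.tsum_eq_zero_add
  rw [series.tsum_eq, hν_sum.tsum_eq, tsum_mul_left] at split_first
  simpa only [pow_zero, inv_one, one_mul, avoidanceProb_zero, mul_one] using split_first

open CBRW in
/-- For any probability measure `ν` satisfying the balance equation with parameter `ε > 0`,
`1 = ν 0 + ν 0 ∑_{k=1}^∞ (1 + ε ν 0)^{-k} ℙ_0(τ_0 ≥ k + 1)`. -/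
theorem balance_probability_measure_sum_identity
    (d : ℕ) (hd : 1 ≤ d) (ε : ℝ) (hε : 0 < ε) (ν : (Fin d → ℤ) → ℝ)
    (hν : IsProbMeasure d ν) (hbal : BalanceEq d ε ν) :
    1 = ν 0 + ν 0 * ∑' k : ℕ, ((1 + ε * ν 0) ^ (k + 1))⁻¹ * avoidProb d 0 0 (k + 1) := by
  have : NeZero d := ⟨Nat.one_le_iff_ne_zero.1 hd⟩
  simpa only [avoidProb_eq_avoidanceProb] using balance_probability_measure_sum_identity_general
    (closure_range_dir d) hε hν.1 hν.2 hbal.isBalanced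
end

section
/- Uniqueness for the lattice heat equation with a potential at the origin: let d ≥ 1 and ε ≥ 0. Suppose v_1, v_2 : ℤ^d × [0,∞) → ℝ are such that (i) for each x ∈ ℤ^d and each i ∈ {1,2}, the map t ↦ v_i(x,t) is differentiable on [0,∞) and satisfies ∂_t v_i(x,t) = Δ v_i(x,t) + ε · 1{x=0} · v_i(x,t) for all t ≥ 0; (ii) v_1(x,0) = v_2(x,0) for all x ∈ ℤ^d; (iii) for every T > 0, Σ_{x∈ℤ^d} sup_{0≤t≤T} (v_1(x,t) − v_2(x,t))² < ∞. Then v_1(x,t) = v_2(x,t) for all x ∈ ℤ^d and t ≥ 0. -/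
open Finset

namespace CBRW

/-- The discrete Laplacian on `ℤ^d`:
`Δf(x) = (1/(2d)) ∑ i (f (x + e i) + f (x - e i) - 2 f x)`. -/
noncomputable def lap (d : ℕ) (f : (Fin d → ℤ) → ℝ) (x : Fin d → ℤ) : ℝ :=
  (1 / (2 * (d : ℝ))) * ∑ i : Fin d, (f (x + e d i) + f (x - e d i) - 2 * f x)

end CBRW

/-!
The Laplacian and multiplication by a bounded potential are bounded operators for the supremum
norm; let `C` bound the norm of their sum. Square-summability of the suprema bounds the difference
of two solutions by some `A` on `[0, T]`. Integrating the equation `n` times improves this bound to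
`A (C t)^n / n!`, which tends to `0` as `n → ∞`.
-/

section PicardIteration

variable {ι E : Type*} [NormedAddCommGroup E] [NormedSpace ℝ E]

theorem hasDerivAt_mul_sub_pow_succ_div_factorial (C a t : ℝ) (n : ℕ) :
    HasDerivAt (fun s ↦ (C * (s - a)) ^ (n + 1) / ((n + 1).factorial : ℝ))
      (C * ((C * (t - a)) ^ n / (n.factorial : ℝ))) t := by
  refine (((((hasDerivAt_id t).sub_const a).const_mul C).pow (n + 1)).div_const
    ((n + 1).factorial : ℝ)).congr_deriv ?_
  simp only [Nat.factorial_succ, id, Nat.add_sub_cancel]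
  push_cast
  field_simp

theorem norm_le_mul_pow_succ_div_factorial {f f' : ℝ → E} {a b A C : ℝ} {n : ℕ}
    (hf : ContinuousOn f (Set.Icc a b))
    (hf' : ∀ t ∈ Set.Ico a b, HasDerivWithinAt f (f' t) (Set.Ici t) t) (ha : f a = 0)
    (hbound : ∀ t ∈ Set.Ico a b, ‖f' t‖ ≤ C * (A * ((C * (t - a)) ^ n / (n.factorial : ℝ))))
    {t : ℝ} (ht : t ∈ Set.Icc a b) :
    ‖f t‖ ≤ A * ((C * (t - a)) ^ (n + 1) / ((n + 1).factorial : ℝ)) := by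
  refine image_norm_le_of_norm_deriv_right_le_deriv_boundary hf hf' (by simp [ha])
    (fun s ↦ (hasDerivAt_mul_sub_pow_succ_div_factorial C a s n).const_mul A)
    (fun s hs ↦ ?_) ht
  exact (hbound s hs).trans_eq (mul_left_comm _ _ _)

variable {w w' : ι → ℝ → E} {a b A C : ℝ}

theorem norm_le_mul_pow_div_factorial_of_norm_deriv_le
    (hw : ∀ x, ContinuousOn (w x) (Set.Icc a b))
    (hw' : ∀ x, ∀ t ∈ Set.Ico a b, HasDerivWithinAt (w x) (w' x t) (Set.Ici t) t)
    (hC : ∀ t ∈ Set.Ico a b, ∀ K, (∀ x, ‖w x t‖ ≤ K) → ∀ x, ‖w' x t‖ ≤ C * K)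
    (ha : ∀ x, w x a = 0) (hA : ∀ x, ∀ t ∈ Set.Icc a b, ‖w x t‖ ≤ A) (n : ℕ) :
    ∀ x, ∀ t ∈ Set.Icc a b, ‖w x t‖ ≤ A * ((C * (t - a)) ^ n / (n.factorial : ℝ)) := by
  induction n with
  | zero => simpa using hA
  | succ n ih =>
    exact fun x t ht ↦ norm_le_mul_pow_succ_div_factorial (hw x) (hw' x) (ha x)
      (fun s hs ↦ hC s hs _ (fun y ↦ ih y s (Set.Ico_subset_Icc_self hs)) x) ht

theorem eq_zero_of_norm_deriv_le
    (hw : ∀ x, ContinuousOn (w x) (Set.Icc a b))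
    (hw' : ∀ x, ∀ t ∈ Set.Ico a b, HasDerivWithinAt (w x) (w' x t) (Set.Ici t) t)
    (hC : ∀ t ∈ Set.Ico a b, ∀ K, (∀ x, ‖w x t‖ ≤ K) → ∀ x, ‖w' x t‖ ≤ C * K)
    (ha : ∀ x, w x a = 0) (hA : ∀ x, ∀ t ∈ Set.Icc a b, ‖w x t‖ ≤ A)
    (x : ι) {t : ℝ} (ht : t ∈ Set.Icc a b) : w x t = 0 := by
  have hlim : Filter.Tendsto (fun n : ℕ ↦ A * ((C * (t - a)) ^ n / (n.factorial : ℝ)))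
      Filter.atTop (nhds 0) := by
    simpa using (FloorSemiring.tendsto_pow_div_factorial_atTop (C * (t - a))).const_mul A
  exact norm_le_zero_iff.1 <| ge_of_tendsto' hlim fun n ↦
    norm_le_mul_pow_div_factorial_of_norm_deriv_le hw hw' hC ha hA n x t ht

end PicardIteration

theorem exists_abs_le_of_summable_biSup_sq {ι α : Type*} {s : Set α} {w : ι → α → ℝ}
    (hbdd : ∀ x, BddAbove ((fun t ↦ w x t ^ 2) '' s))
    (hsum : Summable fun x ↦ ⨆ t ∈ s, w x t ^ 2) : ∃ A, ∀ x, ∀ t ∈ s, |w x t| ≤ A := by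
  refine ⟨√(∑' x, ⨆ t ∈ s, w x t ^ 2), fun x t ht ↦ Real.abs_le_sqrt ?_⟩
  have hbdd' : BddAbove (⋃ u, Set.range fun _ : u ∈ s ↦ w x u ^ 2) :=
    (hbdd x).mono <| Set.iUnion_subset fun _ ↦ Set.range_subset_iff.2 (Set.mem_image_of_mem _)
  calc w x t ^ 2 ≤ ⨆ u ∈ s, w x u ^ 2 := le_ciSup₂ hbdd' t ht
    _ ≤ ∑' y, ⨆ u ∈ s, w y u ^ 2 := hsum.le_tsum x fun y _ ↦
      Real.iSup_nonneg fun u ↦ Real.iSup_nonneg fun _ ↦ sq_nonneg _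

namespace CBRW

variable {d : ℕ}

theorem lap_sub (f g : (Fin d → ℤ) → ℝ) (x : Fin d → ℤ) :
    lap d (f - g) x = lap d f x - lap d g x := by
  simp only [lap, Pi.sub_apply, ← mul_sub, ← Finset.sum_sub_distrib]
  congr! 2
  ring

theorem abs_lap_le {f : (Fin d → ℤ) → ℝ} {K : ℝ} (hf : ∀ x, |f x| ≤ K) (x : Fin d → ℤ) :
    |lap d f x| ≤ 2 * K := by
  have hK : 0 ≤ K := (abs_nonneg _).trans (hf x)
  have hterm (i : Fin d) : |f (x + e d i) + f (x - e d i) - 2 * f x| ≤ 4 * K := by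
    have h₁ := abs_le.1 (hf (x + e d i))
    have h₂ := abs_le.1 (hf (x - e d i))
    have h₃ := abs_le.1 (hf x)
    exact abs_le.2 ⟨by linarith, by linarith⟩
  calc |lap d f x|
      = 1 / (2 * (d : ℝ)) * |∑ i : Fin d, (f (x + e d i) + f (x - e d i) - 2 * f x)| := by
        rw [lap, abs_mul, abs_of_nonneg (by positivity)]
    _ ≤ 1 / (2 * (d : ℝ)) * (d * (4 * K)) := by
        gcongr
        simpa using (Finset.abs_sum_le_sum_abs _ _).trans
          (Finset.sum_le_card_nsmul Finset.univ _ _ fun i _ ↦ hterm i)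
    _ = 2 * K * ((d : ℝ) / d) := by ring
    _ ≤ 2 * K := mul_le_of_le_one_right (by positivity) (div_self_le_one _)

theorem abs_lap_add_mul_le {V f : (Fin d → ℤ) → ℝ} {c K : ℝ} (hV : ∀ x, |V x| ≤ c)
    (hf : ∀ x, |f x| ≤ K) (x : Fin d → ℤ) : |lap d f x + V x * f x| ≤ (2 + c) * K := by
  have hVf : |V x * f x| ≤ c * K := by
    rw [abs_mul]
    exact mul_le_mul (hV x) (hf x) (abs_nonneg _) ((abs_nonneg _).trans (hV x))
  calc |lap d f x + V x * f x| ≤ |lap d f x| + |V x * f x| := abs_add_le _ _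
    _ ≤ 2 * K + c * K := add_le_add (abs_lap_le hf x) hVf
    _ = (2 + c) * K := by ring

/-- `v` solves the lattice heat equation `∂ₜ v = Δ v + V v` on `ℤ^d × [0, ∞)`. At each site the
time derivative is taken within `[0, ∞)`, hence is one-sided at `t = 0`. -/
def IsHeatSolution (V : (Fin d → ℤ) → ℝ) (v : (Fin d → ℤ) → ℝ → ℝ) : Prop :=
  ∀ (x : Fin d → ℤ) (t : ℝ), 0 ≤ t →
    HasDerivWithinAt (v x) (lap d (fun y ↦ v y t) x + V x * v x t) (Set.Ici 0) t

namespace IsHeatSolution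

variable {V : (Fin d → ℤ) → ℝ} {v v₁ v₂ : (Fin d → ℤ) → ℝ → ℝ}

theorem sub (hv₁ : IsHeatSolution V v₁) (hv₂ : IsHeatSolution V v₂) :
    IsHeatSolution V (v₁ - v₂) := fun x t ht ↦ by
  refine ((hv₁ x t ht).sub (hv₂ x t ht)).congr_deriv ?_
  have hlap : lap d (fun y ↦ (v₁ - v₂) y t) x =
      lap d (fun y ↦ v₁ y t) x - lap d (fun y ↦ v₂ y t) x := lap_sub _ _ x
  rw [hlap, Pi.sub_apply, Pi.sub_apply]
  ring

theorem continuousOn (hv : IsHeatSolution V v) (x : Fin d → ℤ) :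
    ContinuousOn (v x) (Set.Ici 0) :=
  fun t ht ↦ (hv x t ht).continuousWithinAt

theorem bddAbove_image_sq (hv : IsHeatSolution V v) (x : Fin d → ℤ) (T : ℝ) :
    BddAbove ((fun t ↦ v x t ^ 2) '' Set.Icc 0 T) :=
  isCompact_Icc.bddAbove_image (((hv.continuousOn x).mono Set.Icc_subset_Ici_self).pow 2)

theorem eq_zero {c T A : ℝ} (hV : ∀ x, |V x| ≤ c) (hv : IsHeatSolution V v) (h0 : ∀ x, v x 0 = 0)
    (hA : ∀ x, ∀ t ∈ Set.Icc 0 T, |v x t| ≤ A) (x : Fin d → ℤ) {t : ℝ} (ht : t ∈ Set.Icc 0 T) :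
    v x t = 0 :=
  eq_zero_of_norm_deriv_le (fun y ↦ (hv.continuousOn y).mono Set.Icc_subset_Ici_self)
    (fun y s hs ↦ (hv y s hs.1).mono (Set.Ici_subset_Ici.2 hs.1))
    (fun _ _ _ hK y ↦ abs_lap_add_mul_le hV hK y) h0 hA x ht

end IsHeatSolution

end CBRW

open CBRW in
theorem lattice_heat_equation_uniqueness_general {d : ℕ} {V : (Fin d → ℤ) → ℝ} {c : ℝ}
    (hV : ∀ x, |V x| ≤ c) {v₁ v₂ : (Fin d → ℤ) → ℝ → ℝ}
    (hv₁ : IsHeatSolution V v₁) (hv₂ : IsHeatSolution V v₂) (h0 : ∀ x, v₁ x 0 = v₂ x 0)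
    (hbdd : ∀ T : ℝ, 0 < T → ∃ A, ∀ x, ∀ t ∈ Set.Icc 0 T, |v₁ x t - v₂ x t| ≤ A)
    (x : Fin d → ℤ) (t : ℝ) (ht : 0 ≤ t) : v₁ x t = v₂ x t := by
  obtain ⟨A, hA⟩ := hbdd (t + 1) (by positivity)
  exact sub_eq_zero.1 <|
    (hv₁.sub hv₂).eq_zero hV (fun y ↦ sub_eq_zero.2 (h0 y)) hA x ⟨ht, by linarith⟩

open CBRW in
/-- Uniqueness for the lattice heat equation with a potential `ε 𝟙_{x=0}` at the origin:
two solutions with the same initial condition and square-summable difference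
(uniformly on compact time intervals) coincide. -/
theorem lattice_heat_equation_uniqueness
    (d : ℕ) (hd : 1 ≤ d) (ε : ℝ) (hε : 0 ≤ ε)
    (v₁ v₂ : (Fin d → ℤ) → ℝ → ℝ)
    (hv₁ : ∀ (x : Fin d → ℤ) (t : ℝ), 0 ≤ t →
      HasDerivWithinAt (v₁ x)
        (lap d (fun y => v₁ y t) x + ε * (if x = 0 then 1 else 0) * v₁ x t)
        (Set.Ici 0) t)
    (hv₂ : ∀ (x : Fin d → ℤ) (t : ℝ), 0 ≤ t →
      HasDerivWithinAt (v₂ x)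
        (lap d (fun y => v₂ y t) x + ε * (if x = 0 then 1 else 0) * v₂ x t)
        (Set.Ici 0) t)
    (h0 : ∀ x : Fin d → ℤ, v₁ x 0 = v₂ x 0)
    (hsum : ∀ T : ℝ, 0 < T →
      Summable fun x : Fin d → ℤ => ⨆ t ∈ Set.Icc (0 : ℝ) T, (v₁ x t - v₂ x t) ^ 2) :
    ∀ (x : Fin d → ℤ) (t : ℝ), 0 ≤ t → v₁ x t = v₂ x t :=
  have hV (x : Fin d → ℤ) : |ε * (if x = 0 then 1 else 0)| ≤ |ε| := by split_ifs <;> simp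
  lattice_heat_equation_uniqueness_general hV hv₁ hv₂ h0 fun T hT ↦
    exists_abs_le_of_summable_biSup_sq
      (fun x ↦ (IsHeatSolution.sub hv₁ hv₂).bddAbove_image_sq x T) (hsum T hT)
end
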